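/- Let α be the unique positive real root of 457α⁴ − 246α² + 72α − 27 = 0 (α ≈ 0.6597177), let ζ = (1 − 9α + √(73α² − 18α + 9)) / (4 + 4α), and let γ = α·log₂ 9 + 2α·log₂((1 + 2ζ)/(1 − ζ)²) − (1 − α)·log₂ ζ (γ ≈ 3.9215913). Then there exists a real constant C such that for all m ≥ 1, |log₂ maxocc((000111)^m) − (γ·m − (1/2)·log₂ m)| ≤ C; that is, the subword entropy of (000111)^m equals γm − (1/2)log₂ m + O(1) as m → ∞. -/

import Mathlib

open List Real

/-- `occ w u` is the number of occurrences of `u` as a subword (subsequence) of `w`,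
i.e. the multiplicity of `u` among the `2^|w|` sublists of `w`. -/
def occ {α : Type*} [DecidableEq α] (w u : List α) : ℕ := w.sublists.count u

/-- `maxocc w` is the maximal number of occurrences of any subword of `w`. -/
noncomputable def maxocc {α : Type*} [DecidableEq α] (w : List α) : ℕ :=
  sSup {n : ℕ | ∃ u : List α, occ w u = n}

/-- `rep v m` is the concatenation of `m` copies of the word `v`. -/
def rep {α : Type*} (v : List α) (m : ℕ) : List α := (List.replicate m v).flatten

/-!
Fix the number of blocks. The number of occurrences of a word in them is a coefficient of a product
of power series, one for each maximal run of the word, which count the ways to place that run.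
Give every block the weight `y = √ζ`. Then runs of length two have total weight `1`, and no other
run is heavier, so a word has at most about `ζ ^ (-m)` occurrences in `2 * m` blocks. Hence
`γ = -log₂ ζ`, and the expression for `γ` does not depend on `α` once `ζ` is known.

The factor `1 / √m` is a local limit effect. All runs share the factor `1 + X ^ 2`, so the
coefficients of a product of `r` run series are smoothed by a binomial law and lose a factor `√r`;
words with few runs have exponentially fewer occurrences anyway. Conversely, the run series of
length two is the law of a step of a renewal process. It visits `2 * m` with probability bounded
below, and by Chebyshev's inequality typically at one of `O(√m)` times `k`, so for some `k` the word
with `k` runs of length two has the required number of occurrences.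
-/

open PowerSeries
open Finset.HasAntidiagonal (antidiagonal mem_antidiagonal)

section Occurrences

variable {β : Type*} [DecidableEq β]

theorem occ_eq_count_sublists' (w u : List β) : occ w u = w.sublists'.count u :=
  (sublists_perm_sublists' w).count_eq u

theorem occ_le_maxocc (w u : List β) : occ w u ≤ maxocc w := by
  refine le_csSup ⟨w.sublists.length, ?_⟩ ⟨u, rfl⟩
  rintro _ ⟨v, rfl⟩
  exact count_le_length

theorem exists_occ_eq_maxocc (w : List β) : ∃ u, occ w u = maxocc w := by
  refine Nat.sSup_mem (s := {n : ℕ | ∃ u : List β, occ w u = n}) ⟨_, [], rfl⟩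
    ⟨w.sublists.length, ?_⟩
  rintro _ ⟨v, rfl⟩
  exact count_le_length

theorem occ_nil_cons (x : β) (u : List β) : occ [] (x :: u) = 0 := by
  simp [occ]

theorem occ_cons_self (x : β) (w u : List β) :
    occ (x :: w) (x :: u) = occ w (x :: u) + occ w u := by
  simp only [occ_eq_count_sublists', sublists'_cons, count_append]
  rw [count_map_of_injective _ _ cons_injective]

theorem occ_cons_of_head?_ne {x : β} {u : List β} (h : u.head? ≠ some x) (w : List β) :
    occ (x :: w) u = occ w u := by
  simp only [occ_eq_count_sublists', sublists'_cons, count_append]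
  rw [Nat.add_eq_left, count_eq_zero]
  intro hu
  obtain ⟨v, -, rfl⟩ := mem_map.1 hu
  exact h rfl

theorem occ_nil_right (w : List β) : occ w [] = 1 := by
  induction w with
  | nil => simp [occ]
  | cons x w ih => rw [occ_cons_of_head?_ne (by simp), ih]

theorem occ_replicate_append_of_head?_ne {x : β} {u : List β} (h : u.head? ≠ some x)
    (b : ℕ) (w : List β) : occ (replicate b x ++ w) u = occ w u := by
  induction b with
  | zero => rfl
  | succ b ih => rw [replicate_succ, cons_append, occ_cons_of_head?_ne h, ih]

theorem occ_replicate_append_replicate_append {x : β} {u : List β} (h : u.head? ≠ some x)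
    (w : List β) (b a : ℕ) :
    occ (replicate b x ++ w) (replicate a x ++ u) =
      ∑ ij ∈ antidiagonal a, b.choose ij.1 * occ w (replicate ij.2 x ++ u) := by
  induction b generalizing a with
  | zero =>
    cases a with
    | zero => simp
    | succ a => simp [Finset.Nat.sum_antidiagonal_succ]
  | succ b ih =>
    cases a with
    | zero => simpa using occ_replicate_append_of_head?_ne h (b + 1) w
    | succ a =>
      rw [replicate_succ (n := b), replicate_succ (n := a), cons_append, cons_append,
        occ_cons_self, ← cons_append, ← replicate_succ, ih (a + 1), ih a,
        Finset.Nat.sum_antidiagonal_succ, Finset.Nat.sum_antidiagonal_succ]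
      simp only [Nat.choose_succ_succ', Nat.choose_zero_right, add_mul, Finset.sum_add_distrib]
      ring

end Occurrences

section Runs

/-- `blockWord b c N` consists of `N` blocks of length `b`, alternately filled with the letters
`c` and `c + 1`. -/
def blockWord (b : ℕ) : Fin 2 → ℕ → List (Fin 2)
  | _, 0 => []
  | c, N + 1 => replicate b c ++ blockWord b (c + 1) N

/-- `runWord c as` is the binary word starting with `c` whose successive maximal runs have the
lengths listed in `as`, provided these are positive. -/
def runWord : Fin 2 → List ℕ → List (Fin 2)
  | _, [] => []
  | c, a :: as => replicate a c ++ runWord (c + 1) as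

theorem add_one_add_one_fin_two (c : Fin 2) : c + 1 + 1 = c := by
  fin_cases c <;> rfl

theorem eq_or_eq_add_one_fin_two (c d : Fin 2) : d = c ∨ d = c + 1 := by
  fin_cases c <;> fin_cases d <;> decide

theorem rep_eq_blockWord (b : ℕ) (c : Fin 2) (m : ℕ) :
    rep (replicate b c ++ replicate b (c + 1)) m = blockWord b c (2 * m) := by
  induction m with
  | zero => rfl
  | succ m ih =>
    rw [Nat.mul_succ, blockWord, blockWord, add_one_add_one_fin_two, ← ih]
    simp [rep, replicate_succ]

theorem exists_eq_runWord (u : List (Fin 2)) : ∃ c as, 0 ∉ as ∧ u = runWord c as := by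
  induction u with
  | nil => exact ⟨0, [], by simp, rfl⟩
  | cons x u ih =>
    obtain ⟨c, as, has, rfl⟩ := ih
    rcases eq_or_eq_add_one_fin_two x c with rfl | rfl
    · cases as with
      | nil => exact ⟨c, [1], by simp, rfl⟩
      | cons a as => exact ⟨c, (a + 1) :: as, by simp_all, rfl⟩
    · exact ⟨x, 1 :: as, by simpa using has, rfl⟩

theorem head?_runWord_add_one_ne (c : Fin 2) {as : List ℕ} (has : 0 ∉ as) :
    (runWord (c + 1) as).head? ≠ some c := by
  cases as with
  | nil => simp [runWord]
  | cons a as =>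
    obtain ⟨a, rfl⟩ := Nat.exists_eq_succ_of_ne_zero (ne_of_mem_of_not_mem mem_cons_self has)
    simp [runWord, replicate_succ]

end Runs

section PowerSeriesTools

/-- The power series with nonnegative coefficients. -/
def nonnegSeries : Subsemiring ℝ⟦X⟧ where
  carrier := {F | ∀ n, 0 ≤ coeff n F}
  zero_mem' n := by simp
  one_mem' n := by
    rw [coeff_one]
    split_ifs <;> norm_num
  add_mem' hF hG n := by
    rw [map_add]
    exact add_nonneg (hF n) (hG n)
  mul_mem' hF hG n := by
    rw [coeff_mul]
    exact Finset.sum_nonneg fun ij _ => mul_nonneg (hF ij.1) (hG ij.2)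

theorem X_mem_nonnegSeries : X ∈ nonnegSeries := by
  intro n
  rw [coeff_X]
  split_ifs <;> norm_num

theorem smul_mem_nonnegSeries {c : ℝ} (hc : 0 ≤ c) {F : ℝ⟦X⟧} (hF : F ∈ nonnegSeries) :
    c • F ∈ nonnegSeries := by
  intro n
  rw [map_smul]
  exact smul_nonneg hc (hF n)

theorem coeff_le_coeff_mul {F G : ℝ⟦X⟧} (hF : F ∈ nonnegSeries) (hG : G ∈ nonnegSeries)
    (hG0 : 1 ≤ coeff 0 G) (n : ℕ) : coeff n F ≤ coeff n (F * G) := by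
  rw [coeff_mul]
  exact (le_mul_of_one_le_right (hF n) hG0).trans <|
    Finset.single_le_sum (a := (n, 0)) (f := fun ij : ℕ × ℕ => coeff ij.1 F * coeff ij.2 G)
      (fun ij _ => mul_nonneg (hF ij.1) (hG ij.2)) (mem_antidiagonal.2 (add_zero n))

/-- The series `F` converges at `y` to the value `M`. -/
def HasValueAt (F : ℝ⟦X⟧) (y M : ℝ) : Prop := HasSum (fun n => coeff n F * y ^ n) M

section HasValueAt

variable {F G : ℝ⟦X⟧} {x y M L : ℝ}

theorem hasValueAt_one (y : ℝ) : HasValueAt 1 y 1 := by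
  simpa [HasValueAt] using
    hasSum_single (f := fun n => coeff n (1 : ℝ⟦X⟧) * y ^ n) 0
      fun n hn => by simp [coeff_one, hn]

theorem hasValueAt_X (y : ℝ) : HasValueAt X y y := by
  simpa [HasValueAt] using
    hasSum_single (f := fun n => coeff n (X : ℝ⟦X⟧) * y ^ n) 1
      fun n hn => by simp [coeff_X, hn]

theorem HasValueAt.add (hF : HasValueAt F y M) (hG : HasValueAt G y L) :
    HasValueAt (F + G) y (M + L) := by
  unfold HasValueAt at *
  simpa only [map_add, add_mul] using HasSum.add hF hG

theorem HasValueAt.sub (hF : HasValueAt F y M) (hG : HasValueAt G y L) :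
    HasValueAt (F - G) y (M - L) := by
  unfold HasValueAt at *
  simpa only [map_sub, sub_mul] using HasSum.sub hF hG

theorem HasValueAt.smul (hF : HasValueAt F y M) (c : ℝ) : HasValueAt (c • F) y (c * M) := by
  unfold HasValueAt at *
  simpa only [map_smul, smul_eq_mul, mul_assoc] using HasSum.mul_left c hF

theorem HasValueAt.sum {ι : Type*} {s : Finset ι} {F : ι → ℝ⟦X⟧} {M : ι → ℝ}
    (h : ∀ i ∈ s, HasValueAt (F i) y (M i)) : HasValueAt (∑ i ∈ s, F i) y (∑ i ∈ s, M i) := by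
  unfold HasValueAt at *
  simpa only [map_sum, Finset.sum_mul] using hasSum_sum h

theorem coeff_mul_mul_pow (F G : ℝ⟦X⟧) (y : ℝ) (n : ℕ) : coeff n (F * G) * y ^ n =
    ∑ ij ∈ antidiagonal n, coeff ij.1 F * y ^ ij.1 * (coeff ij.2 G * y ^ ij.2) := by
  rw [coeff_mul, Finset.sum_mul]
  refine Finset.sum_congr rfl fun ij hij => ?_
  rw [← mem_antidiagonal.1 hij, pow_add]
  ring

theorem HasValueAt.mul (hF : HasValueAt F y M) (hG : HasValueAt G y L) :
    HasValueAt (F * G) y (M * L) := by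
  simp only [HasValueAt, coeff_mul_mul_pow] at *
  rw [← hF.tsum_eq, ← hG.tsum_eq,
    tsum_mul_tsum_eq_tsum_sum_antidiagonal_of_summable_norm hF.summable.norm hG.summable.norm]
  exact (summable_norm_sum_mul_antidiagonal_of_summable_norm hF.summable.norm
    hG.summable.norm).of_norm.hasSum

theorem HasValueAt.pow (hF : HasValueAt F y M) (r : ℕ) : HasValueAt (F ^ r) y (M ^ r) := by
  induction r with
  | zero => simpa using hasValueAt_one y
  | succ r ih => simpa only [pow_succ] using ih.mul hF

theorem HasValueAt.rescale (h : HasValueAt F (x * y) M) :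
    HasValueAt (PowerSeries.rescale x F) y M := by
  simpa [HasValueAt, coeff_rescale, mul_pow, mul_assoc, mul_left_comm, mul_comm] using h

theorem HasValueAt.nonneg (h : HasValueAt F y M) (hF : F ∈ nonnegSeries) (hy : 0 ≤ y) : 0 ≤ M :=
  HasSum.nonneg (fun n => mul_nonneg (hF n) (pow_nonneg hy n)) h

theorem coeff_mul_mul_pow_le (hF : F ∈ nonnegSeries) (hy : 0 ≤ y) (hFy : HasValueAt F y M)
    (hL : 0 ≤ L) (hG : ∀ j, coeff j G * y ^ j ≤ L) (n : ℕ) :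
    coeff n (F * G) * y ^ n ≤ M * L := by
  have hFpos (i : ℕ) : 0 ≤ coeff i F * y ^ i := mul_nonneg (hF i) (pow_nonneg hy i)
  calc coeff n (F * G) * y ^ n
      = ∑ ij ∈ antidiagonal n, coeff ij.1 F * y ^ ij.1 * (coeff ij.2 G * y ^ ij.2) :=
        coeff_mul_mul_pow F G y n
    _ ≤ ∑ ij ∈ antidiagonal n, coeff ij.1 F * y ^ ij.1 * L :=
        Finset.sum_le_sum fun ij _ => mul_le_mul_of_nonneg_left (hG ij.2) (hFpos ij.1)
    _ = (∑ i ∈ Finset.range (n + 1), coeff i F * y ^ i) * L := by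
        rw [Finset.Nat.sum_antidiagonal_eq_sum_range_succ_mk, Finset.sum_mul]
    _ ≤ M * L := by
        gcongr
        exact sum_le_hasSum _ (fun i _ => hFpos i) hFy

end HasValueAt

/-- The power series of `1 / (1 - X ^ d)`. -/
noncomputable def geomSeries (d : ℕ) : ℝ⟦X⟧ := mk fun n => if d ∣ n then 1 else 0

theorem coeff_zero_geomSeries (d : ℕ) : coeff 0 (geomSeries d) = 1 := by
  simp [geomSeries]

theorem geomSeries_mem_nonnegSeries (d : ℕ) : geomSeries d ∈ nonnegSeries := by
  intro n
  rw [geomSeries, coeff_mk]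
  split_ifs <;> norm_num

theorem one_sub_X_pow_mul_geomSeries {d : ℕ} (hd : d ≠ 0) : (1 - X ^ d) * geomSeries d = 1 := by
  ext n
  rw [sub_mul, one_mul, map_sub, coeff_X_pow_mul', coeff_one]
  rcases lt_or_ge n d with hn | hn
  · simp [geomSeries, hn.not_ge, Nat.dvd_iff_mod_eq_zero, Nat.mod_eq_of_lt hn]
  · simp [geomSeries, hn, Nat.dvd_sub_iff_left hn dvd_rfl, show n ≠ 0 by lia]

theorem hasValueAt_geomSeries {d : ℕ} (hd : d ≠ 0) {y : ℝ} (hy : 0 ≤ y) (hy1 : y < 1) :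
    HasValueAt (geomSeries d) y (1 - y ^ d)⁻¹ := by
  refine ((mul_right_injective₀ hd).hasSum_iff fun n hn => ?_).1 ?_
  · have : ¬ d ∣ n := fun ⟨k, hk⟩ => hn ⟨k, hk.symm⟩
    simp [geomSeries, this]
  · simpa [geomSeries, Function.comp_def, pow_mul] using
      hasSum_geometric_of_lt_one (pow_nonneg hy d) (pow_lt_one₀ hy hy1 hd)

end PowerSeriesTools

section RunSeries

variable {b : ℕ}

/-- The generating function of a run of length `a` in blocks of length `b`: the coefficient of
`X ^ n` counts the ways to place the run, starting from a block of its own letter, so that its last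
letter falls into the `n`-th block. Only odd `n = 2j + 1` contribute, and the run then uses the last
of `j + 1` blocks of its own letter. -/
noncomputable def runSeries (b a : ℕ) : ℝ⟦X⟧ :=
  mk fun n => if Odd n then ((b * (n / 2 + 1)).choose a : ℝ) - (b * (n / 2)).choose a else 0

theorem runSeries_mem_nonnegSeries (a : ℕ) : runSeries b a ∈ nonnegSeries := by
  intro n
  rw [runSeries, coeff_mk]
  split_ifs
  · exact sub_nonneg.2 (mod_cast Nat.choose_le_choose a (by gcongr; omega))
  · rfl

theorem runSeries_zero : runSeries b 0 = 0 := by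
  ext n
  simp [runSeries]

theorem coeff_runSeries_add_two (a n : ℕ) : coeff (n + 2) (runSeries b a) =
    ∑ ij ∈ antidiagonal a, (b.choose ij.1 : ℝ) * coeff n (runSeries b ij.2) := by
  by_cases hn : Odd n
  · have choose_mul_add_one (j : ℕ) : ((b * (j + 1)).choose a : ℝ) =
        ∑ ij ∈ antidiagonal a, (b.choose ij.1 : ℝ) * (b * j).choose ij.2 := by
      rw [mul_add_one, add_comm, Nat.add_choose_eq]
      push_cast
      rfl
    simp only [runSeries, coeff_mk, Nat.odd_add, hn, even_two, if_true, Nat.add_div_right, two_pos,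
      choose_mul_add_one, mul_sub, Finset.sum_sub_distrib]
  · simp [runSeries, hn, Nat.odd_add]

theorem runSeries_eq {a : ℕ} (ha : a ≠ 0) : runSeries b a = (b.choose a : ℝ) • X +
    X ^ 2 * ∑ ij ∈ antidiagonal a, (b.choose ij.1 : ℝ) • runSeries b ij.2 := by
  ext n
  rcases n with _ | _ | n
  · simp [runSeries]
  · simp [runSeries, coeff_X_pow_mul', Nat.choose_eq_zero_of_lt (Nat.pos_of_ne_zero ha)]
  · simp [coeff_runSeries_add_two, coeff_X_pow_mul', coeff_X]

theorem runSeries_mul_eq {a : ℕ} (ha : a ≠ 0) (F : ℝ⟦X⟧) :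
    runSeries b a * F = X * ((b.choose a : ℝ) • F +
      ∑ ij ∈ antidiagonal a, (b.choose ij.1 : ℝ) • (X * (runSeries b ij.2 * F))) := by
  conv_lhs => rw [runSeries_eq ha]
  simp only [add_mul, mul_add, Finset.mul_sum, Finset.sum_mul, smul_mul_assoc, mul_smul_comm,
    pow_two, mul_assoc]

/-- The generating function, over the number `N` of blocks of length `b`, of the number of
occurrences of a word with run lengths `as`; the factor `1 / (1 - X)` accounts for the unused blocks
at the end. -/
noncomputable def occSeries (b : ℕ) (as : List ℕ) : ℝ⟦X⟧ :=
  (as.map (runSeries b)).prod * geomSeries 1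

theorem occ_blockWord_replicate_append {c : Fin 2} {u : List (Fin 2)} (hu : u.head? ≠ some c)
    {F : ℝ⟦X⟧} (hF : ∀ N, (occ (blockWord b (c + 1) N) u : ℝ) = coeff N F) (N : ℕ) {a : ℕ}
    (ha : a ≠ 0) :
    (occ (blockWord b c N) (replicate a c ++ u) : ℝ) = coeff N (runSeries b a * F) := by
  suffices h : (∀ k ≠ 0, (occ (blockWord b c N) (replicate k c ++ u) : ℝ) =
      coeff N (runSeries b k * F)) ∧ ∀ k ≠ 0,
        (occ (blockWord b (c + 1) N) (replicate k c ++ u) : ℝ) =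
          coeff N (X * (runSeries b k * F)) from h.1 a ha
  clear ha a
  induction N with
  | zero =>
    refine ⟨fun k hk => ?_, fun k hk => ?_⟩ <;>
    · obtain ⟨k, rfl⟩ := Nat.exists_eq_succ_of_ne_zero hk
      simp [blockWord, replicate_succ, occ_nil_cons, runSeries]
  | succ N ih =>
    refine ⟨fun a ha => ?_, fun k hk => ?_⟩
    · have occ_rest (k : ℕ) : (occ (blockWord b (c + 1) N) (replicate k c ++ u) : ℝ) =
          (if k = 0 then coeff N F else 0) + coeff N (X * (runSeries b k * F)) := by
        split_ifs with hk
        · simp [hk, hF, runSeries_zero]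
        · rw [ih.2 k hk, zero_add]
      rw [blockWord, occ_replicate_append_replicate_append hu, runSeries_mul_eq ha,
        coeff_succ_X_mul]
      push_cast
      simp only [occ_rest, mul_add, Finset.sum_add_distrib, map_add, map_sum, map_smul,
        smul_eq_mul]
      congr 1
      obtain ⟨a, rfl⟩ := Nat.exists_eq_succ_of_ne_zero ha
      simp [Finset.Nat.sum_antidiagonal_succ']
    · obtain ⟨k, rfl⟩ := Nat.exists_eq_succ_of_ne_zero hk
      rw [coeff_succ_X_mul, ← ih.1 _ hk, blockWord, add_one_add_one_fin_two,
        occ_replicate_append_of_head?_ne]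
      simp [replicate_succ]

theorem occ_blockWord_runWord {as : List ℕ} (has : 0 ∉ as) (c : Fin 2) (N : ℕ) :
    (occ (blockWord b c N) (runWord c as) : ℝ) = coeff N (occSeries b as) := by
  induction as generalizing c N with
  | nil => simp [runWord, occSeries, geomSeries, occ_nil_right]
  | cons a as ih =>
    simp only [mem_cons, not_or] at has
    rw [runWord, occ_blockWord_replicate_append (head?_runWord_add_one_ne c has.2)
      (ih has.2 (c + 1)) N (Ne.symm has.1), occSeries, occSeries, map_cons, prod_cons, mul_assoc]

end RunSeries

section BinomialBound

theorem centralBinom_sq_mul_le (n : ℕ) : n.centralBinom ^ 2 * (2 * n + 1) ≤ 16 ^ n := by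
  induction n with
  | zero => simp
  | succ n ih =>
    refine Nat.le_of_mul_le_mul_left ?_ (pow_pos n.succ_pos 2)
    calc (n + 1) ^ 2 * ((n + 1).centralBinom ^ 2 * (2 * (n + 1) + 1))
        = ((n + 1) * (n + 1).centralBinom) ^ 2 * (2 * n + 3) := by ring
      _ = n.centralBinom ^ 2 * (2 * n + 1) * (4 * ((2 * n + 1) * (2 * n + 3))) := by
        rw [Nat.succ_mul_centralBinom_succ]
        ring
      _ ≤ 16 ^ n * (16 * (n + 1) ^ 2) := Nat.mul_le_mul ih (by nlinarith)
      _ = (n + 1) ^ 2 * 16 ^ (n + 1) := by ring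

theorem choose_sq_mul_le_four_pow (n k : ℕ) : n.choose k ^ 2 * (n + 1) ≤ 4 ^ n := by
  obtain ⟨m, rfl | rfl⟩ := n.even_or_odd'
  · calc (2 * m).choose k ^ 2 * (2 * m + 1)
        ≤ m.centralBinom ^ 2 * (2 * m + 1) := by gcongr; exact Nat.choose_le_centralBinom k m
      _ ≤ 16 ^ m := centralBinom_sq_mul_le m
      _ = 4 ^ (2 * m) := by rw [pow_mul]; norm_num
  · have choose_le : (2 * m + 1).choose k ≤ (2 * m + 1).choose m := by
      convert Nat.choose_le_middle k (2 * m + 1) using 2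
      omega
    have two_mul_choose : (m + 1).centralBinom = 2 * (2 * m + 1).choose m := by
      rw [Nat.centralBinom_eq_two_mul_choose, mul_add_one, Nat.choose_succ_succ',
        Nat.choose_symm_half, ← two_mul]
    refine Nat.le_of_mul_le_mul_left ?_ four_pos
    calc 4 * ((2 * m + 1).choose k ^ 2 * (2 * m + 1 + 1))
        ≤ 4 * ((2 * m + 1).choose m ^ 2 * (2 * (m + 1) + 1)) := by gcongr; omega
      _ = (m + 1).centralBinom ^ 2 * (2 * (m + 1) + 1) := by rw [two_mul_choose]; ring
      _ ≤ 16 ^ (m + 1) := centralBinom_sq_mul_le (m + 1)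
      _ = 4 * 4 ^ (2 * m + 1) := by
        rw [← pow_succ', show 16 = 4 ^ 2 by rfl, ← pow_mul]
        ring_nf

theorem choose_mul_pow_eq_sum (t : ℝ) (r j : ℕ) : (r.choose j : ℝ) * t ^ j =
    ∑ k ∈ Finset.range (r + 1), t ^ k * (1 - t) ^ (r - k) * r.choose k * k.choose j := by
  have coeff_one_add_X_pow (k : ℕ) : coeff j ((1 + X : ℝ⟦X⟧) ^ k) = k.choose j := by
    simp [← Polynomial.coeff_one_add_X_pow ℝ k j, ← Polynomial.coeff_coe]
  have rescale_pow : rescale t ((1 + X) ^ r) = (t • (1 + X) + (1 - t) • 1) ^ r := by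
    rw [map_pow, map_add, map_one, rescale_X, smul_eq_C_mul, smul_eq_C_mul, map_sub, map_one]
    ring
  calc (r.choose j : ℝ) * t ^ j
      = coeff j (rescale t ((1 + X) ^ r)) := by
        rw [coeff_rescale, coeff_one_add_X_pow, mul_comm]
    _ = ∑ k ∈ Finset.range (r + 1), t ^ k * (1 - t) ^ (r - k) * r.choose k * k.choose j := by
        rw [rescale_pow, add_pow, map_sum]
        refine Finset.sum_congr rfl fun k _ => ?_
        rw [smul_pow, smul_pow, one_pow, smul_mul_smul_comm, mul_one, ← nsmul_eq_mul', map_nsmul,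
          map_smul, coeff_one_add_X_pow]
        simp only [smul_eq_mul, nsmul_eq_mul]
        ring

theorem sum_choose_mul_pow_div_le (p : ℝ) {q : ℝ} (hq : 0 ≤ q) (r : ℕ) :
    (∑ k ∈ Finset.range (r + 1), p ^ k * q ^ (r - k) * r.choose k / (k + 1)) * (p * (r + 1)) ≤
      (p + q) ^ (r + 1) := by
  rw [add_pow, Finset.sum_range_succ' _ (r + 1), Finset.sum_mul]
  refine le_add_of_le_of_nonneg (Finset.sum_le_sum fun k _ => le_of_eq ?_) (by positivity)
  have := congrArg (Nat.cast : ℕ → ℝ) (Nat.add_one_mul_choose_eq r k)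
  push_cast at this
  rw [Nat.add_sub_add_right]
  field_simp
  linear_combination p ^ k * p * q ^ (r - k) * this

/-- Conditioning a binomial law of parameter `t / (1 + t)` on a coarser binomial law reduces to the
symmetric case, where `choose_sq_mul_le_four_pow` applies; Cauchy–Schwarz averages over the coarser
law. -/
theorem sq_choose_mul_pow_mul_le {t : ℝ} (ht0 : 0 ≤ t) (ht1 : t ≤ 1) (r j : ℕ) :
    ((r.choose j : ℝ) * t ^ j) ^ 2 * (2 * t * (r + 1)) ≤ (1 + t) ^ r * (1 + t) ^ (r + 1) := by
  have h1t : 0 ≤ 1 - t := sub_nonneg.2 ht1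
  let w (k : ℕ) : ℝ := (2 * t) ^ k * (1 - t) ^ (r - k) * r.choose k
  have hw (k : ℕ) : 0 ≤ w k := by positivity
  have sum_w : ∑ k ∈ Finset.range (r + 1), w k = (1 + t) ^ r := by
    rw [← add_pow]
    ring
  have sq_term_le (k : ℕ) : (t ^ k * (1 - t) ^ (r - k) * r.choose k * k.choose j) ^ 2 ≤
      w k * (w k / (k + 1)) := by
    have : ((k.choose j : ℝ)) ^ 2 * (k + 1) ≤ 4 ^ k := mod_cast choose_sq_mul_le_four_pow k j
    calc (t ^ k * (1 - t) ^ (r - k) * r.choose k * k.choose j) ^ 2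
        = (t ^ k * (1 - t) ^ (r - k) * r.choose k) ^ 2 * k.choose j ^ 2 := by ring
      _ ≤ (t ^ k * (1 - t) ^ (r - k) * r.choose k) ^ 2 * (4 ^ k / (k + 1)) := by
        gcongr
        rwa [le_div_iff₀ (by positivity)]
      _ = w k * (w k / (k + 1)) := by
        rw [show (4 : ℝ) ^ k = 2 ^ k * 2 ^ k by rw [← mul_pow]; norm_num]
        simp only [w]
        ring
  have cauchy_schwarz := Finset.sum_sq_le_sum_mul_sum_of_sq_le_mul (Finset.range (r + 1))
    (fun k _ => hw k) (fun k _ => div_nonneg (hw k) (by positivity)) fun k _ => sq_term_le k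
  rw [← choose_mul_pow_eq_sum, sum_w] at cauchy_schwarz
  calc ((r.choose j : ℝ) * t ^ j) ^ 2 * (2 * t * (r + 1))
      ≤ (1 + t) ^ r * (∑ k ∈ Finset.range (r + 1), w k / (k + 1)) * (2 * t * (r + 1)) := by gcongr
    _ = (1 + t) ^ r * ((∑ k ∈ Finset.range (r + 1), w k / (k + 1)) * (2 * t * (r + 1))) := by ring
    _ ≤ (1 + t) ^ r * (1 + t) ^ (r + 1) := by
      gcongr
      have := sum_choose_mul_pow_div_le (2 * t) h1t r
      rwa [show 2 * t + (1 - t) = 1 + t by ring] at this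

theorem coeff_one_add_X_sq_pow (r n : ℕ) :
    coeff n ((1 + X ^ 2 : ℝ⟦X⟧) ^ r) = if 2 ∣ n then (r.choose (n / 2) : ℝ) else 0 := by
  have : (1 + X ^ 2 : ℝ⟦X⟧) ^ r =
      (Polynomial.expand ℝ 2 ((1 + Polynomial.X) ^ r) : Polynomial ℝ) := by
    simp
  rw [this, Polynomial.coeff_coe, Polynomial.coeff_expand two_pos, Polynomial.coeff_one_add_X_pow]

theorem coeff_one_add_X_sq_pow_mul_le {y : ℝ} (hy0 : 0 < y) (hy1 : y ≤ 1) (r n : ℕ) :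
    coeff n ((1 + X ^ 2 : ℝ⟦X⟧) ^ r) * y ^ n ≤
      √((1 + y ^ 2) / (2 * y ^ 2)) / √(r + 1) * (1 + y ^ 2) ^ r := by
  rw [coeff_one_add_X_sq_pow]
  split_ifs with hn
  · obtain ⟨j, rfl⟩ := hn
    rw [Nat.mul_div_cancel_left j two_pos, pow_mul]
    refine (sq_le_sq₀ (by positivity) (by positivity)).1 ?_
    rw [mul_pow _ ((1 + y ^ 2) ^ r), div_pow, Real.sq_sqrt (by positivity),
      Real.sq_sqrt (by positivity), div_div, div_mul_eq_mul_div, le_div_iff₀ (by positivity)]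
    refine (sq_choose_mul_pow_mul_le (sq_nonneg y) (pow_le_one₀ hy0.le hy1) r j).trans_eq ?_
    ring
  · rw [zero_mul]
    positivity

end BinomialBound

section RunValue

variable {b : ℕ} {y : ℝ}

theorem one_sub_X_sq_mul_runSeries_succ (b a : ℕ) : (1 - X ^ 2) * runSeries b (a + 1) =
    (b.choose (a + 1) : ℝ) • X +
      X ^ 2 * ∑ ij ∈ antidiagonal a, (b.choose (ij.1 + 1) : ℝ) • runSeries b ij.2 := by
  have := runSeries_eq (b := b) a.succ_ne_zero
  rw [Finset.Nat.sum_antidiagonal_succ, Nat.choose_zero_right, Nat.cast_one, one_smul] at this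
  linear_combination this

theorem runSeries_succ_eq_geomSeries_mul (b a : ℕ) : runSeries b (a + 1) =
    geomSeries 2 * ((b.choose (a + 1) : ℝ) • X +
      X ^ 2 * ∑ ij ∈ antidiagonal a, (b.choose (ij.1 + 1) : ℝ) • runSeries b ij.2) := by
  rw [← one_sub_X_sq_mul_runSeries_succ]
  linear_combination -runSeries b (a + 1) * one_sub_X_pow_mul_geomSeries two_ne_zero

/-- The value at `y` of the generating function of a run of length `a`. -/
noncomputable def runValue (b : ℕ) (y : ℝ) (a : ℕ) : ℝ := ∑' n, coeff n (runSeries b a) * y ^ n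

theorem runValue_zero (b : ℕ) (y : ℝ) : runValue b y 0 = 0 := by
  simp [runValue, runSeries_zero]

theorem hasValueAt_runSeries (hy0 : 0 ≤ y) (hy1 : y < 1) (a : ℕ) :
    HasValueAt (runSeries b a) y (runValue b y a) := by
  refine Summable.hasSum ?_
  induction a using Nat.strong_induction_on with
  | h a ih =>
    cases a with
    | zero => simp [runSeries_zero]
    | succ a =>
      have hasValueAt_of_mem (ij : ℕ × ℕ) (hij : ij ∈ antidiagonal a) :
          HasValueAt (runSeries b ij.2) y (runValue b y ij.2) :=
        (ih ij.2 (by have := mem_antidiagonal.1 hij; omega)).hasSum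
      have numerator := ((hasValueAt_X y).smul (b.choose (a + 1) : ℝ)).add <|
        ((hasValueAt_X y).pow 2).mul <| HasValueAt.sum fun ij hij =>
          (hasValueAt_of_mem ij hij).smul (b.choose (ij.1 + 1) : ℝ)
      rw [runSeries_succ_eq_geomSeries_mul]
      exact ((hasValueAt_geomSeries two_ne_zero hy0 hy1).mul numerator).summable

theorem one_sub_sq_mul_runValue_succ (hy0 : 0 ≤ y) (hy1 : y < 1) (a : ℕ) :
    (1 - y ^ 2) * runValue b y (a + 1) = b.choose (a + 1) * y +
      y ^ 2 * ∑ ij ∈ antidiagonal a, b.choose (ij.1 + 1) * runValue b y ij.2 := by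
  have hasValueAt_left := ((hasValueAt_one y).sub ((hasValueAt_X y).pow 2)).mul
    (hasValueAt_runSeries (b := b) hy0 hy1 (a + 1))
  rw [one_sub_X_sq_mul_runSeries_succ] at hasValueAt_left
  exact hasValueAt_left.unique <| ((hasValueAt_X y).smul _).add <| ((hasValueAt_X y).pow 2).mul <|
    HasValueAt.sum fun ij _ => (hasValueAt_runSeries hy0 hy1 ij.2).smul _

theorem exists_runSeries_eq_one_add_X_sq_mul (hy0 : 0 ≤ y) (hy1 : y < 1) {a : ℕ} (ha : a ≠ 0) :
    ∃ G ∈ nonnegSeries, runSeries b a = (1 + X ^ 2) * G ∧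
      HasValueAt G y (runValue b y a / (1 + y ^ 2)) := by
  obtain ⟨a, rfl⟩ := Nat.exists_eq_succ_of_ne_zero ha
  have geom_four := one_sub_X_pow_mul_geomSeries four_ne_zero
  have hy4 : y ^ 4 < 1 := pow_lt_one₀ hy0 hy1 four_ne_zero
  refine ⟨geomSeries 4 * ((1 - X ^ 2) * runSeries b (a + 1)), ?_, ?_, ?_⟩
  · rw [one_sub_X_sq_mul_runSeries_succ]
    exact mul_mem (geomSeries_mem_nonnegSeries 4) <|
      add_mem (smul_mem_nonnegSeries (by positivity) X_mem_nonnegSeries) <|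
        mul_mem (pow_mem X_mem_nonnegSeries 2) <| sum_mem fun ij _ =>
          smul_mem_nonnegSeries (by positivity) (runSeries_mem_nonnegSeries ij.2)
  · linear_combination -runSeries b (a + 1) * geom_four
  · convert (hasValueAt_geomSeries four_ne_zero hy0 hy1).mul
      (((hasValueAt_one y).sub ((hasValueAt_X y).pow 2)).mul
        (hasValueAt_runSeries hy0 hy1 (a + 1))) using 1
    have : 1 - y ^ 4 ≠ 0 := by linarith
    field_simp
    ring

theorem exists_prod_runSeries_eq {M : ℝ} (hy0 : 0 ≤ y) (hy1 : y < 1)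
    (hM : ∀ a, runValue b y a ≤ M) {as : List ℕ} (has : 0 ∉ as) :
    ∃ G ∈ nonnegSeries, (as.map (runSeries b)).prod = (1 + X ^ 2) ^ as.length * G ∧
      ∃ q ≤ (M / (1 + y ^ 2)) ^ as.length, HasValueAt G y q := by
  induction as with
  | nil => exact ⟨1, one_mem _, by simp, 1, by simp, hasValueAt_one y⟩
  | cons a as ih =>
    simp only [mem_cons, not_or] at has
    obtain ⟨G, hG, prod_eq, q, hq, hGq⟩ := ih has.2
    obtain ⟨H, hH, run_eq, hHv⟩ := exists_runSeries_eq_one_add_X_sq_mul hy0 hy1 (Ne.symm has.1)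
    refine ⟨H * G, mul_mem hH hG, ?_, runValue b y a / (1 + y ^ 2) * q, ?_, hHv.mul hGq⟩
    · rw [map_cons, prod_cons, prod_eq, run_eq, length_cons]
      ring
    · have q_nonneg := hGq.nonneg hG hy0
      have M_nonneg : 0 ≤ M := (runValue_zero b y).symm.trans_le (hM 0)
      rw [length_cons, pow_succ' (M / _)]
      gcongr
      exact hM a

/-- Evaluation at `y` alone bounds the product of the runs by `M ^ r`; their common factors
`1 + X ^ 2` spread it out over about `√r` exponents, which gains the factor `1 / √r`. -/
theorem coeff_occSeries_mul_pow_le {M : ℝ} (hy0 : 0 < y) (hy1 : y < 1)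
    (hM : ∀ a, runValue b y a ≤ M) {as : List ℕ} (has : 0 ∉ as) (N : ℕ) :
    coeff N (occSeries b as) * y ^ N ≤
      √((1 + y ^ 2) / (2 * y ^ 2)) / (1 - y) * (M ^ as.length / √(as.length + 1)) := by
  obtain ⟨G, hG, prod_eq, q, hq, hGq⟩ := exists_prod_runSeries_eq hy0.le hy1 hM has
  have h1y : 0 < 1 - y := sub_pos.2 hy1
  have series_eq : occSeries b as = (G * geomSeries 1) * (1 + X ^ 2) ^ as.length := by
    rw [occSeries, prod_eq]
    ring
  rw [series_eq]
  refine (coeff_mul_mul_pow_le (mul_mem hG (geomSeries_mem_nonnegSeries 1)) hy0.le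
    (hGq.mul (hasValueAt_geomSeries one_ne_zero hy0.le hy1)) (by positivity)
    (coeff_one_add_X_sq_pow_mul_le hy0 hy1.le as.length) N).trans ?_
  calc q * (1 - y ^ 1)⁻¹ *
        (√((1 + y ^ 2) / (2 * y ^ 2)) / √(as.length + 1) * (1 + y ^ 2) ^ as.length)
      ≤ (M / (1 + y ^ 2)) ^ as.length * (1 - y)⁻¹ *
        (√((1 + y ^ 2) / (2 * y ^ 2)) / √(as.length + 1) * (1 + y ^ 2) ^ as.length) := by
        rw [pow_one]
        gcongr
    _ = √((1 + y ^ 2) / (2 * y ^ 2)) / (1 - y) * (M ^ as.length / √(as.length + 1)) := by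
        rw [div_pow]
        field_simp

end RunValue

section BlocksOfThree

variable {y : ℝ}

theorem runValue_three_one (hy0 : 0 ≤ y) (hy1 : y < 1) :
    runValue 3 y 1 = 3 * y / (1 - y ^ 2) := by
  have h1y : 0 < 1 - y ^ 2 := sub_pos.2 (pow_lt_one₀ hy0 hy1 two_ne_zero)
  have := one_sub_sq_mul_runValue_succ (b := 3) hy0 hy1 0
  simp only [Finset.Nat.antidiagonal_zero, Finset.sum_singleton, runValue_zero] at this
  rw [eq_div_iff h1y.ne']
  norm_num at this
  linarith

theorem runValue_three_two (hy0 : 0 ≤ y) (hy1 : y < 1) :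
    runValue 3 y 2 = 3 * y * (1 + 2 * y ^ 2) / (1 - y ^ 2) ^ 2 := by
  have h1y : 0 < 1 - y ^ 2 := sub_pos.2 (pow_lt_one₀ hy0 hy1 two_ne_zero)
  have := one_sub_sq_mul_runValue_succ (b := 3) hy0 hy1 1
  simp only [Finset.Nat.sum_antidiagonal_succ, Finset.Nat.antidiagonal_zero, Finset.sum_singleton,
    runValue_zero, runValue_three_one hy0 hy1] at this
  norm_num [Nat.choose] at this
  refine mul_left_cancel₀ h1y.ne' (this.trans ?_)
  field_simp
  ring

theorem runValue_three_three (hy0 : 0 ≤ y) (hy1 : y < 1) :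
    runValue 3 y 3 = y * (1 + 16 * y ^ 2 + 10 * y ^ 4) / (1 - y ^ 2) ^ 3 := by
  have h1y : 0 < 1 - y ^ 2 := sub_pos.2 (pow_lt_one₀ hy0 hy1 two_ne_zero)
  have := one_sub_sq_mul_runValue_succ (b := 3) hy0 hy1 2
  simp only [Finset.Nat.sum_antidiagonal_succ, Finset.Nat.antidiagonal_zero, Finset.sum_singleton,
    runValue_zero, runValue_three_one hy0 hy1, runValue_three_two hy0 hy1] at this
  norm_num [Nat.choose] at this
  refine mul_left_cancel₀ h1y.ne' (this.trans ?_)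
  field_simp
  ring

theorem one_sub_sq_mul_runValue_three_add_four (hy0 : 0 ≤ y) (hy1 : y < 1) (a : ℕ) :
    (1 - y ^ 2) * runValue 3 y (a + 4) = y ^ 2 *
      (3 * runValue 3 y (a + 3) + 3 * runValue 3 y (a + 2) + runValue 3 y (a + 1)) := by
  have choose_eq_zero (i : ℕ) : Nat.choose 3 (i + 4) = 0 := Nat.choose_eq_zero_of_lt (by omega)
  rw [one_sub_sq_mul_runValue_succ hy0 hy1 (a + 3)]
  simp only [Finset.Nat.sum_antidiagonal_succ, add_assoc, Nat.reduceAdd, choose_eq_zero]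
  norm_num [Nat.choose]

theorem runValue_three_le_runValue_three_two (hy0 : 0 ≤ y) (hy2 : y ^ 2 ≤ 1 / 8) (a : ℕ) :
    runValue 3 y a ≤ runValue 3 y 2 := by
  have hy1 : y < 1 := by nlinarith
  have h1y : 0 < 1 - y ^ 2 := by linarith
  have two_nonneg : 0 ≤ runValue 3 y 2 := by
    rw [runValue_three_two hy0 hy1]
    positivity
  induction a using Nat.strong_induction_on with
  | h a ih =>
    rcases a with _ | _ | _ | _ | a
    · rwa [runValue_zero]
    · rw [runValue_three_one hy0 hy1, runValue_three_two hy0 hy1,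
        div_le_div_iff₀ h1y (by positivity)]
      have := mul_nonneg (mul_nonneg hy0 (sq_nonneg y)) h1y.le
      nlinarith
    · rfl
    · rw [runValue_three_three hy0 hy1, runValue_three_two hy0 hy1,
        div_le_div_iff₀ (by positivity) (by positivity)]
      suffices 0 ≤ y * (1 - y ^ 2) ^ 2 * (2 - 13 * y ^ 2 - 16 * y ^ 4) by linarith
      have : 0 ≤ 2 - 13 * y ^ 2 - 16 * y ^ 4 := by nlinarith
      positivity
    · have recursion := one_sub_sq_mul_runValue_three_add_four hy0 hy1 a
      have h1 := ih (a + 1) (by omega)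
      have h2 := ih (a + 2) (by omega)
      have h3 := ih (a + 3) (by omega)
      refine le_of_mul_le_mul_left ?_ h1y
      calc (1 - y ^ 2) * runValue 3 y (a + 4)
          ≤ y ^ 2 * (7 * runValue 3 y 2) := by
            rw [recursion]
            gcongr
            linarith
        _ ≤ (1 - y ^ 2) * runValue 3 y 2 := by nlinarith

end BlocksOfThree

section Renewal

/-- The derivation `X d/dX`, which multiplies the coefficient of `X ^ n` by `n`. -/
noncomputable def eulerDerivation : Derivation ℝ ℝ⟦X⟧ ℝ⟦X⟧ := (X : ℝ⟦X⟧) • d⁄dX ℝ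

theorem coeff_eulerDerivation (F : ℝ⟦X⟧) (n : ℕ) :
    coeff n (eulerDerivation F) = n * coeff n F := by
  cases n with
  | zero => simp [eulerDerivation]
  | succ n =>
    rw [eulerDerivation, Derivation.smul_apply, smul_eq_mul, coeff_succ_X_mul, coeff_derivative]
    push_cast
    ring

/-- The coefficients of `p` have total mass `1`, mean `μ` and variance `v`. -/
structure HasMoments (p : ℝ⟦X⟧) (μ v : ℝ) : Prop where
  mass : HasValueAt p 1 1
  mean : HasValueAt (eulerDerivation p) 1 μ
  second : HasValueAt (eulerDerivation (eulerDerivation p)) 1 (v + μ ^ 2)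

namespace HasMoments

variable {p q : ℝ⟦X⟧} {μ v μ' v' : ℝ}

theorem one : HasMoments 1 0 0 :=
  ⟨hasValueAt_one 1, by simp [HasValueAt, hasSum_zero], by simp [HasValueAt, hasSum_zero]⟩

theorem mul (hp : HasMoments p μ v) (hq : HasMoments q μ' v') :
    HasMoments (p * q) (μ + μ') (v + v') := by
  refine ⟨by simpa using hp.mass.mul hq.mass, ?_, ?_⟩
  · convert (hp.mass.mul hq.mean).add (hq.mass.mul hp.mean) using 1
    · simp only [Derivation.leibniz, smul_eq_mul]
    · ring
  · convert ((hp.mass.mul hq.second).add (hq.mass.mul hp.second)).add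
      ((hp.mean.mul hq.mean).smul 2) using 1
    · simp only [Derivation.leibniz, map_add, smul_eq_mul, two_smul]
      ring
    · ring

theorem pow (hp : HasMoments p μ v) (k : ℕ) : HasMoments (p ^ k) (k * μ) (k * v) := by
  induction k with
  | zero => simpa using one
  | succ k ih =>
    rw [pow_succ, Nat.cast_succ, add_one_mul, add_one_mul]
    exact ih.mul hp

theorem hasSum_coeff (h : HasMoments p μ v) : HasSum (fun n => coeff n p) 1 := by
  simpa [HasValueAt] using h.mass

theorem hasSum_coeff_mul (h : HasMoments p μ v) : HasSum (fun n => coeff n p * n) μ := by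
  simpa [HasValueAt, coeff_eulerDerivation, mul_comm] using h.mean

theorem hasSum_coeff_mul_sq (h : HasMoments p μ v) :
    HasSum (fun n => coeff n p * (n : ℝ) ^ 2) (v + μ ^ 2) := by
  simpa [HasValueAt, coeff_eulerDerivation, pow_two, mul_assoc, mul_comm, mul_left_comm]
    using h.second

theorem hasSum_coeff_mul_sub_sq (h : HasMoments p μ v) :
    HasSum (fun n => coeff n p * ((n : ℝ) - μ) ^ 2) v := by
  have expand (n : ℕ) : coeff n p * ((n : ℝ) - μ) ^ 2 =
      coeff n p * (n : ℝ) ^ 2 - 2 * μ * (coeff n p * n) + μ ^ 2 * coeff n p := by ring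
  have value : v = v + μ ^ 2 - 2 * μ * μ + μ ^ 2 * 1 := by ring
  rw [funext expand, value]
  exact (h.hasSum_coeff_mul_sq.sub (h.hasSum_coeff_mul.mul_left (2 * μ))).add
    (h.hasSum_coeff.mul_left (μ ^ 2))

theorem variance_nonneg (hp : p ∈ nonnegSeries) (h : HasMoments p μ v) : 0 ≤ v :=
  h.hasSum_coeff_mul_sub_sq.nonneg fun n => mul_nonneg (hp n) (sq_nonneg _)

end HasMoments

/-- If the coefficients of `p` are the law of a random variable `S`, then the coefficient of `X ^ m`
in `tailSeries p` is the probability that `S > m`. -/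
noncomputable def tailSeries (p : ℝ⟦X⟧) : ℝ⟦X⟧ := (1 - p) * geomSeries 1

/-- If the coefficients of `p` are the law of the steps of a random walk, then the coefficient of
`X ^ n` in `renewalSeries p` is the expected number of visits to `n`. -/
noncomputable def renewalSeries (p : ℝ⟦X⟧) : ℝ⟦X⟧ := (1 - p)⁻¹

variable {p : ℝ⟦X⟧} {μ v : ℝ}

theorem coeff_mul_geomSeries_one (F : ℝ⟦X⟧) (n : ℕ) :
    coeff n (F * geomSeries 1) = ∑ i ∈ Finset.range (n + 1), coeff i F := by
  simp [coeff_mul, geomSeries, Finset.Nat.sum_antidiagonal_eq_sum_range_succ_mk]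

theorem coeff_tailSeries (p : ℝ⟦X⟧) (m : ℕ) :
    coeff m (tailSeries p) = 1 - ∑ i ∈ Finset.range (m + 1), coeff i p := by
  rw [tailSeries, sub_mul, one_mul, map_sub, coeff_mul_geomSeries_one]
  simp [geomSeries]

theorem tailSeries_mem_nonnegSeries (hp : p ∈ nonnegSeries) (h : HasMoments p μ v) :
    tailSeries p ∈ nonnegSeries := by
  intro m
  rw [coeff_tailSeries, sub_nonneg]
  exact sum_le_hasSum _ (fun i _ => hp i) h.hasSum_coeff

theorem markov_coeff_tailSeries (hp : p ∈ nonnegSeries) (h : HasMoments p μ v) {g : ℕ → ℝ}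
    (hg : ∀ n, 0 ≤ g n) {s : ℝ} (hs : HasSum (fun n => coeff n p * g n) s) {m : ℕ} {c : ℝ}
    (hc : ∀ n > m, c ≤ g n) : coeff m (tailSeries p) * c ≤ s := by
  have tail_mass := (hasSum_nat_add_iff' (m + 1)).2 h.hasSum_coeff
  rw [← coeff_tailSeries] at tail_mass
  calc coeff m (tailSeries p) * c
      ≤ s - ∑ n ∈ Finset.range (m + 1), coeff n p * g n :=
        hasSum_le (fun n => mul_le_mul_of_nonneg_left (hc _ (by omega)) (hp _))
          (tail_mass.mul_right c) ((hasSum_nat_add_iff' (m + 1)).2 hs)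
    _ ≤ s := sub_le_self _ (Finset.sum_nonneg fun n _ => mul_nonneg (hp n) (hg n))

theorem chebyshev_upper_tail (hp : p ∈ nonnegSeries) (h : HasMoments p μ v) {m : ℕ} {c : ℝ}
    (hc0 : 0 ≤ c) (hc : μ + c ≤ m) : coeff m (tailSeries p) * c ^ 2 ≤ v := by
  refine markov_coeff_tailSeries hp h (fun n => sq_nonneg _) h.hasSum_coeff_mul_sub_sq
    fun n hn => ?_
  have : (m : ℝ) < n := mod_cast hn
  gcongr
  linarith

theorem chebyshev_lower_tail (hp : p ∈ nonnegSeries) (h : HasMoments p μ v) {m : ℕ} {c : ℝ}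
    (hc0 : 0 ≤ c) (hc : m + c ≤ μ) : (∑ n ∈ Finset.range (m + 1), coeff n p) * c ^ 2 ≤ v := by
  rw [Finset.sum_mul]
  refine (Finset.sum_le_sum fun n hn => ?_).trans <| sum_le_hasSum (Finset.range (m + 1))
    (fun n _ => mul_nonneg (hp n) (sq_nonneg _)) h.hasSum_coeff_mul_sub_sq
  have : (n : ℝ) ≤ m := mod_cast Finset.mem_range_succ_iff.1 hn
  have := hp n
  rw [← sub_sq_comm]
  gcongr
  linarith

theorem summable_coeff_tailSeries (hp : p ∈ nonnegSeries) (h : HasMoments p μ v) :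
    Summable fun n => coeff n (tailSeries p) := by
  have tail_le (n : ℕ) : coeff n (tailSeries p) ≤ (v + μ ^ 2) * (1 / ((n + 1 : ℕ) : ℝ) ^ 2) := by
    rw [mul_one_div, le_div_iff₀ (by positivity)]
    refine markov_coeff_tailSeries hp h (fun n => sq_nonneg _) h.hasSum_coeff_mul_sq fun i hi => ?_
    gcongr
    exact hi
  exact Summable.of_nonneg_of_le (tailSeries_mem_nonnegSeries hp h) tail_le
    (((summable_nat_add_iff 1).2 (Real.summable_one_div_nat_pow.2 one_lt_two)).mul_left _)

-- The times outside `[a, b)` are those at which a random walk with mean step `μ` is expected at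
-- distance at least `r * √m` from `m`.
theorem exists_time_window (hμ : 1 ≤ μ) {m : ℕ} (hm : 0 < m) {r : ℝ} (hr : 1 ≤ r) :
    ∃ a b : ℕ, a ≤ b ∧ (b - a : ℕ) ≤ (2 * r + 2) * √m ∧ (a = 0 ∨ a * μ + r * √m ≤ m) ∧
      m + r * √m ≤ b * μ ∧ b ≤ 3 * r * m := by
  have hw : 1 ≤ √(m : ℝ) := one_le_sqrt.2 (mod_cast hm)
  have hww : √(m : ℝ) * √m = m := mul_self_sqrt m.cast_nonneg
  have hμ0 : 0 < μ := by linarith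
  set w := √(m : ℝ)
  set a := ⌊(m - r * w) / μ⌋₊
  set b := ⌈(m + r * w) / μ⌉₊
  have lt_a : (m - r * w) / μ < a + 1 := Nat.lt_floor_add_one _
  have b_lt : b < (m + r * w) / μ + 1 := Nat.ceil_lt_add_one (by positivity)
  have hab : a ≤ b := by
    refine (Nat.floor_mono ?_).trans (Nat.floor_le_ceil _)
    gcongr
    nlinarith
  refine ⟨a, b, hab, ?_, ?_, (div_le_iff₀ hμ0).1 (Nat.le_ceil _), ?_⟩
  · rw [Nat.cast_sub hab]
    have : (m + r * w) / μ - (m - r * w) / μ = 2 * r * w / μ := by ring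
    have : 2 * r * w / μ ≤ 2 * r * w := div_le_self (by positivity) hμ
    linarith
  · rcases a.eq_zero_or_pos with ha | ha
    · exact Or.inl ha
    · have := (le_div_iff₀ hμ0).1 (Nat.floor_le (Nat.pos_of_floor_pos ha).le)
      exact Or.inr (by linarith)
  · have : (m + r * w) / μ ≤ m + r * w := div_le_self (by positivity) hμ
    have w_le : w ≤ m := by nlinarith
    have : (m : ℝ) ≤ r * m := le_mul_of_one_le_left m.cast_nonneg hr
    have : r * w ≤ r * m := by gcongr
    linarith

theorem coeff_zero_tailSeries (hp0 : coeff 0 p = 0) : coeff 0 (tailSeries p) = 1 := by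
  simp [coeff_tailSeries, hp0]

theorem one_sub_mul_renewalSeries (hp0 : coeff 0 p = 0) : (1 - p) * renewalSeries p = 1 := by
  refine PowerSeries.mul_inv_cancel _ ?_
  rw [← coeff_zero_eq_constantCoeff_apply, map_sub, hp0]
  simp

theorem renewalSeries_mul_tailSeries (hp0 : coeff 0 p = 0) :
    renewalSeries p * tailSeries p = geomSeries 1 := by
  rw [tailSeries]
  linear_combination geomSeries 1 * one_sub_mul_renewalSeries hp0

theorem renewalSeries_eq_one_add (hp0 : coeff 0 p = 0) :
    renewalSeries p = 1 + p * renewalSeries p := by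
  linear_combination one_sub_mul_renewalSeries hp0

theorem renewalSeries_mem_nonnegSeries (hp0 : coeff 0 p = 0) (hp : p ∈ nonnegSeries) :
    renewalSeries p ∈ nonnegSeries := by
  intro n
  induction n using Nat.strong_induction_on with
  | h n ih =>
    rw [renewalSeries_eq_one_add hp0, map_add, coeff_mul]
    refine add_nonneg (one_mem nonnegSeries n) (Finset.sum_nonneg fun ij hij => ?_)
    rcases Nat.eq_zero_or_pos ij.1 with hi | hi
    · rw [hi, hp0, zero_mul]
    · have := mem_antidiagonal.1 hij
      exact mul_nonneg (hp _) (ih _ (by omega))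

theorem HasMoments.one_le_mean (hp0 : coeff 0 p = 0) (hp : p ∈ nonnegSeries)
    (h : HasMoments p μ v) : 1 ≤ μ := by
  refine hasSum_le (fun n => ?_) h.hasSum_coeff h.hasSum_coeff_mul
  rcases n.eq_zero_or_pos with rfl | hn
  · simp [hp0]
  · exact le_mul_of_one_le_right (hp n) (mod_cast hn)

theorem coeff_renewalSeries_mem_Icc (hp0 : coeff 0 p = 0) (hp : p ∈ nonnegSeries)
    (h : HasMoments p μ v) (n : ℕ) : coeff n (renewalSeries p) ∈ Set.Icc 0 1 := by
  refine ⟨renewalSeries_mem_nonnegSeries hp0 hp n, ?_⟩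
  calc coeff n (renewalSeries p)
      ≤ coeff n (renewalSeries p * tailSeries p) :=
        coeff_le_coeff_mul (renewalSeries_mem_nonnegSeries hp0 hp)
          (tailSeries_mem_nonnegSeries hp h) (coeff_zero_tailSeries hp0).ge n
    _ = 1 := by simp [renewalSeries_mul_tailSeries hp0, geomSeries]

theorem coeff_one_pow_mul_coeff_renewalSeries_le (hp0 : coeff 0 p = 0) (hp : p ∈ nonnegSeries)
    (j n : ℕ) :
    coeff 1 p ^ j * coeff n (renewalSeries p) ≤ coeff (n + j) (renewalSeries p) := by
  have hU := renewalSeries_mem_nonnegSeries hp0 hp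
  induction j with
  | zero => simp
  | succ j ih =>
    calc coeff 1 p ^ (j + 1) * coeff n (renewalSeries p)
        = coeff 1 p * (coeff 1 p ^ j * coeff n (renewalSeries p)) := by ring
      _ ≤ coeff 1 p * coeff (n + j) (renewalSeries p) := mul_le_mul_of_nonneg_left ih (hp 1)
      _ ≤ coeff (n + j + 1) (p * renewalSeries p) := by
        rw [coeff_mul]
        exact Finset.single_le_sum (a := (1, n + j))
          (f := fun ij : ℕ × ℕ => coeff ij.1 p * coeff ij.2 (renewalSeries p))
          (fun ij _ => mul_nonneg (hp ij.1) (hU ij.2)) (mem_antidiagonal.2 (add_comm 1 (n + j)))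
      _ ≤ coeff (n + j + 1) (renewalSeries p) := by
        conv_rhs => rw [renewalSeries_eq_one_add hp0, map_add]
        exact le_add_of_nonneg_left (one_mem nonnegSeries _)

theorem coeff_one_pow_mul_tail_mul_renewal_le (hp0 : coeff 0 p = 0) (hp : p ∈ nonnegSeries)
    (h : HasMoments p μ v) {j J n : ℕ} (hjJ : j ≤ J) (hjn : j ≤ n) :
    coeff 1 p ^ J * (coeff j (tailSeries p) * coeff (n - j) (renewalSeries p))
      ≤ coeff n (renewalSeries p) := by
  have tail_le_one : coeff j (tailSeries p) ≤ 1 := by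
    rw [coeff_tailSeries]
    exact sub_le_self _ (Finset.sum_nonneg fun i _ => hp i)
  have drop := coeff_one_pow_mul_coeff_renewalSeries_le hp0 hp j (n - j)
  rw [Nat.sub_add_cancel hjn] at drop
  refine le_trans ?_ drop
  have hU : 0 ≤ coeff (n - j) (renewalSeries p) := renewalSeries_mem_nonnegSeries hp0 hp _
  exact mul_le_mul
    (pow_le_pow_of_le_one (hp 1) (le_hasSum h.hasSum_coeff 1 fun i _ => hp i) hjJ)
    (mul_le_of_le_one_left hU tail_le_one)
    (mul_nonneg (tailSeries_mem_nonnegSeries hp h j) hU) (pow_nonneg (hp 1) j)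

theorem sum_tail_mul_renewal (hp0 : coeff 0 p = 0) (n : ℕ) : ∑ j ∈ Finset.range (n + 1),
    coeff j (tailSeries p) * coeff (n - j) (renewalSeries p) = 1 := by
  have := congrArg (coeff n) (renewalSeries_mul_tailSeries hp0)
  rw [mul_comm, coeff_mul, Finset.Nat.sum_antidiagonal_eq_sum_range_succ_mk] at this
  simpa [geomSeries] using this

-- Averaged against the summable sequence of tails, the renewal probabilities give `1`, and they
-- cannot drop by more than the factor `coeff 1 p` per step.
theorem exists_le_coeff_renewalSeries (hp0 : coeff 0 p = 0) (hp : p ∈ nonnegSeries)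
    (hp1 : 0 < coeff 1 p) (h : HasMoments p μ v) : ∃ c > 0, ∀ n, c ≤ coeff n (renewalSeries p) := by
  have hT := tailSeries_mem_nonnegSeries hp h
  have hU := coeff_renewalSeries_mem_Icc hp0 hp h
  obtain ⟨s, hs⟩ := summable_iff_vanishing_norm.1 (summable_coeff_tailSeries hp h) (1 / 2)
    one_half_pos
  set J := s.sup id
  refine ⟨coeff 1 p ^ J / (2 * (s.card + 1)), by positivity, fun n => ?_⟩
  have near : ∑ j ∈ Finset.range (n + 1) with j ∈ s,
      coeff j (tailSeries p) * coeff (n - j) (renewalSeries p)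
        ≤ s.card * (coeff n (renewalSeries p) / coeff 1 p ^ J) := by
    have term_le (j : ℕ) (hj : j ∈ (Finset.range (n + 1)).filter (· ∈ s)) :
        coeff j (tailSeries p) * coeff (n - j) (renewalSeries p)
          ≤ coeff n (renewalSeries p) / coeff 1 p ^ J := by
      rw [Finset.mem_filter, Finset.mem_range_succ_iff] at hj
      rw [le_div_iff₀' (by positivity)]
      exact coeff_one_pow_mul_tail_mul_renewal_le hp0 hp h (Finset.le_sup (f := id) hj.2) hj.1
    refine (Finset.sum_le_card_nsmul _ _ _ term_le).trans ?_
    rw [nsmul_eq_mul]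
    have := (hU n).1
    gcongr
    exact fun j hj => (Finset.mem_filter.1 hj).2
  have far : ∑ j ∈ Finset.range (n + 1) with j ∉ s,
      coeff j (tailSeries p) * coeff (n - j) (renewalSeries p) ≤ 1 / 2 := by
    refine (Finset.sum_le_sum fun j _ => mul_le_of_le_one_right (hT j) (hU (n - j)).2).trans ?_
    refine (le_abs_self _).trans (hs _ (Finset.disjoint_left.2 fun j hj => ?_)).le
    exact (Finset.mem_filter.1 hj).2
  have average := sum_tail_mul_renewal hp0 n
  rw [← Finset.sum_filter_add_sum_filter_not _ (· ∈ s)] at average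
  have half_le : 1 / 2 ≤ s.card * (coeff n (renewalSeries p) / coeff 1 p ^ J) := by linarith
  rw [← mul_div_assoc, le_div_iff₀ (by positivity)] at half_le
  rw [div_le_iff₀ (by positivity)]
  linarith [(hU n).1]

theorem renewalSeries_eq_sum_add (hp0 : coeff 0 p = 0) (b : ℕ) :
    renewalSeries p = ∑ k ∈ Finset.range b, p ^ k + p ^ b * renewalSeries p := by
  linear_combination (∑ k ∈ Finset.range b, p ^ k) * one_sub_mul_renewalSeries hp0
    - renewalSeries p * geom_sum_mul_neg p b

-- A walk with positive steps that visits `m` before time `a` is beyond `m` at time `a`.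
theorem coeff_sum_pow_le_coeff_tailSeries (hp0 : coeff 0 p = 0) (hp : p ∈ nonnegSeries)
    (h : HasMoments p μ v) (a m : ℕ) :
    coeff m (∑ k ∈ Finset.range a, p ^ k) ≤ coeff m (tailSeries (p ^ a)) := by
  have factor : tailSeries (p ^ a) = (∑ k ∈ Finset.range a, p ^ k) * tailSeries p := by
    rw [tailSeries, tailSeries, ← geom_sum_mul_neg, mul_assoc]
  rw [factor]
  exact coeff_le_coeff_mul (sum_mem fun k _ => pow_mem hp k) (tailSeries_mem_nonnegSeries hp h)
    (coeff_zero_tailSeries hp0).ge m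

theorem coeff_pow_mul_renewalSeries_le (hp0 : coeff 0 p = 0) (hp : p ∈ nonnegSeries)
    (h : HasMoments p μ v) (b m : ℕ) :
    coeff m (p ^ b * renewalSeries p) ≤ ∑ n ∈ Finset.range (m + 1), coeff n (p ^ b) := by
  refine (coeff_le_coeff_mul
    (mul_mem (pow_mem hp b) (renewalSeries_mem_nonnegSeries hp0 hp))
    (tailSeries_mem_nonnegSeries hp h) (coeff_zero_tailSeries hp0).ge m).trans_eq ?_
  rw [mul_assoc, renewalSeries_mul_tailSeries hp0, coeff_mul_geomSeries_one]

theorem coeff_sum_pow_le_div (hp0 : coeff 0 p = 0) (hp : p ∈ nonnegSeries)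
    (h : HasMoments p μ v) {a m : ℕ} {r : ℝ} (hm : 0 < m) (hr : 1 ≤ r)
    (ha : a = 0 ∨ a * μ + r * √m ≤ m) :
    coeff m (∑ k ∈ Finset.range a, p ^ k) ≤ v / r := by
  have hm' : (0 : ℝ) < m := mod_cast hm
  have hv : 0 ≤ v := h.variance_nonneg hp
  have hμ : 1 ≤ μ := h.one_le_mean hp0 hp
  rcases ha with rfl | ha
  · rw [Finset.sum_range_zero, map_zero]
    positivity
  have a_le : (a : ℝ) ≤ m := by
    have : 0 ≤ r * √m := by positivity
    have : (a : ℝ) ≤ a * μ := le_mul_of_one_le_right a.cast_nonneg hμ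
    linarith
  have chebyshev := chebyshev_upper_tail (pow_mem hp a) (h.pow a) (by positivity) ha
  rw [mul_pow, sq_sqrt hm'.le] at chebyshev
  refine (coeff_sum_pow_le_coeff_tailSeries hp0 hp h a m).trans ?_
  calc coeff m (tailSeries (p ^ a)) ≤ a * v / (r ^ 2 * m) := by
        rwa [le_div_iff₀ (by positivity)]
    _ ≤ m * v / (r ^ 2 * m) := by gcongr
    _ = v / r ^ 2 := by field_simp
    _ ≤ v / r := by gcongr; exact le_self_pow₀ hr two_ne_zero

theorem coeff_pow_mul_renewalSeries_le_div (hp0 : coeff 0 p = 0) (hp : p ∈ nonnegSeries)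
    (h : HasMoments p μ v) {b m : ℕ} {r : ℝ} (hm : 0 < m) (hr : 0 < r) (hb : m + r * √m ≤ b * μ)
    (hb' : b ≤ 3 * r * m) : coeff m (p ^ b * renewalSeries p) ≤ 3 * v / r := by
  have hm' : (0 : ℝ) < m := mod_cast hm
  have hv : 0 ≤ v := h.variance_nonneg hp
  have chebyshev := chebyshev_lower_tail (pow_mem hp b) (h.pow b) (by positivity) hb
  rw [mul_pow, sq_sqrt hm'.le] at chebyshev
  refine (coeff_pow_mul_renewalSeries_le hp0 hp h b m).trans ?_
  calc ∑ n ∈ Finset.range (m + 1), coeff n (p ^ b) ≤ b * v / (r ^ 2 * m) := by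
        rwa [le_div_iff₀ (by positivity)]
    _ ≤ 3 * r * m * v / (r ^ 2 * m) := by gcongr
    _ = 3 * v / r := by field_simp

theorem exists_coeff_pow_ge (hp0 : coeff 0 p = 0) (hp : p ∈ nonnegSeries) (hp1 : 0 < coeff 1 p)
    (h : HasMoments p μ v) :
    ∃ κ > 0, ∀ m : ℕ, 0 < m → ∃ k : ℕ, κ / √m ≤ coeff m (p ^ k) := by
  obtain ⟨c, hc, hcU⟩ := exists_le_coeff_renewalSeries hp0 hp hp1 h
  have hv : 0 ≤ v := h.variance_nonneg hp
  set r := 1 + 8 * v / c with hr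
  have hr1 : 1 ≤ r := le_add_of_nonneg_right (by positivity)
  have outside_le : 4 * v / r ≤ c / 2 := by
    rw [div_le_iff₀ (by positivity), hr]
    have : c / 2 * (1 + 8 * v / c) = c / 2 + 4 * v := by
      field_simp
      ring
    linarith
  refine ⟨c / 2 / (2 * r + 2), by positivity, fun m hm => ?_⟩
  have : 0 < √(m : ℝ) := sqrt_pos.2 (mod_cast hm)
  obtain ⟨a, b, hab, width, early, late, hb⟩ :=
    exists_time_window (h.one_le_mean hp0 hp) hm hr1
  have inside : c / 2 ≤ ∑ k ∈ Finset.Ico a b, coeff m (p ^ k) := by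
    have split := congrArg (coeff m) (renewalSeries_eq_sum_add hp0 b)
    rw [← Finset.sum_range_add_sum_Ico _ hab, map_add, map_add, map_sum _ _ (Finset.Ico a b)]
      at split
    have := coeff_sum_pow_le_div hp0 hp h hm hr1 early
    have := coeff_pow_mul_renewalSeries_le_div hp0 hp h hm (by positivity) late hb
    have : 4 * v / r = v / r + 3 * v / r := by ring
    linarith [hcU m]
  have Ico_nonempty : (Finset.Ico a b).Nonempty := by
    refine Finset.nonempty_of_sum_ne_zero (f := fun k => coeff m (p ^ k)) (ne_of_gt ?_)
    exact (half_pos hc).trans_le inside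
  obtain ⟨k, -, hk⟩ := Finset.exists_le_of_sum_le (f := fun _ => c / 2 / (2 * r + 2) / √m)
    Ico_nonempty <| inside.trans' <| by
      rw [Finset.sum_const, Nat.card_Ico, nsmul_eq_mul, div_div, mul_div_assoc', mul_comm]
      exact div_le_of_le_mul₀ (by positivity) (by positivity) (by gcongr)
  exact ⟨k, hk⟩

end Renewal

section CriticalWeight

/-- `ζ` is the square of the positive `y < 1` at which runs of length two have weight
`runValue 3 y 2 = 1` in blocks of length three; `eq` is the square of that equation. -/
structure IsCriticalWeight (ζ : ℝ) : Prop where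
  pos : 0 < ζ
  lt_one : ζ < 1
  eq : 9 * ζ * (1 + 2 * ζ) ^ 2 = (1 - ζ) ^ 4

variable {α ζ : ℝ}

theorem quadratic_root (hα : 0 < α) (hα1 : α < 1)
    (hζ : ζ = (1 - 9 * α + √(73 * α ^ 2 - 18 * α + 9)) / (4 + 4 * α)) :
    0 < ζ ∧ ζ < 1 ∧ 2 * (1 + α) * ζ ^ 2 + (9 * α - 1) * ζ + (α - 1) = 0 := by
  have disc_nonneg : 0 ≤ 73 * α ^ 2 - 18 * α + 9 := by nlinarith
  have lt_sqrt : 9 * α - 1 < √(73 * α ^ 2 - 18 * α + 9) := lt_sqrt_of_sq_lt (by nlinarith)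
  have sqrt_lt : √(73 * α ^ 2 - 18 * α + 9) < 3 + 13 * α := by
    rw [sqrt_lt' (by positivity)]
    nlinarith
  refine ⟨?_, ?_, ?_⟩
  · rw [hζ]
    exact div_pos (by linarith) (by positivity)
  · rw [hζ, div_lt_one (by positivity)]
    linarith
  · have root := quadratic_eq_zero_iff (a := 2 * (1 + α)) (b := 9 * α - 1) (c := α - 1)
      (s := √(73 * α ^ 2 - 18 * α + 9)) (by positivity)
      (by rw [mul_self_sqrt disc_nonneg, discrim]; ring) ζ
    rw [← root.2 (Or.inl (by rw [hζ]; ring_nf))]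
    ring

-- The quadratic equation for `ζ` gives `α = (1 - ζ) (1 + 2 ζ) / (2 ζ ^ 2 + 9 ζ + 1)`. Substituted
-- into the quartic, this yields the critical equation times a factor without positive zeros.
theorem critical_eq_of_quartic_eq_zero (hζ : 0 ≤ ζ)
    (quartic : 457 * α ^ 4 - 246 * α ^ 2 + 72 * α - 27 = 0)
    (quadratic : 2 * (1 + α) * ζ ^ 2 + (9 * α - 1) * ζ + (α - 1) = 0) :
    9 * ζ * (1 + 2 * ζ) ^ 2 = (1 - ζ) ^ 4 := by
  set d := 2 * ζ ^ 2 + 9 * ζ + 1 with hd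
  have alpha_eq : α * d = (1 - ζ) * (1 + 2 * ζ) := by linear_combination quadratic
  have substituted : 457 * (α * d) ^ 4 - 246 * (α * d) ^ 2 * d ^ 2 + 72 * (α * d) * d ^ 3
      - 27 * d ^ 4 = 0 := by linear_combination d ^ 4 * quartic
  rw [alpha_eq, hd] at substituted
  have factored : ((1 - ζ) ^ 4 - 9 * ζ * (1 + 2 * ζ) ^ 2) *
      (256 + 1280 * ζ + 768 * ζ ^ 2 + 2816 * ζ ^ 3 + 1792 * ζ ^ 4) = 0 := by
    linear_combination substituted
  exact (sub_eq_zero.1 ((mul_eq_zero.1 factored).resolve_right (by positivity))).symm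

theorem isCriticalWeight_of_quartic_eq_zero (hα : 0 < α)
    (quartic : 457 * α ^ 4 - 246 * α ^ 2 + 72 * α - 27 = 0)
    (hζ : ζ = (1 - 9 * α + √(73 * α ^ 2 - 18 * α + 9)) / (4 + 4 * α)) :
    IsCriticalWeight ζ := by
  have hα1 : α < 1 := by
    by_contra! h
    have : 1 ≤ α ^ 2 := one_le_pow₀ h
    nlinarith
  obtain ⟨pos, lt_one, quadratic⟩ := quadratic_root hα hα1 hζ
  exact ⟨pos, lt_one, critical_eq_of_quartic_eq_zero pos.le quartic quadratic⟩

namespace IsCriticalWeight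

theorem lt_seven_div_hundred (h : IsCriticalWeight ζ) : ζ < 7 / 100 := by
  by_contra! hge
  have := h.eq
  have := h.lt_one
  have : (1 - ζ) ^ 4 ≤ (93 / 100) ^ 4 := by
    gcongr
    linarith
  have : 9 * (7 / 100) * (1 + 2 * (7 / 100)) ^ 2 ≤ 9 * ζ * (1 + 2 * ζ) ^ 2 := by gcongr
  norm_num at *
  linarith

theorem logb_combination_eq (h : IsCriticalWeight ζ) (α : ℝ) :
    α * logb 2 9 + 2 * α * logb 2 ((1 + 2 * ζ) / (1 - ζ) ^ 2) - (1 - α) * logb 2 ζ = -logb 2 ζ := by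
  have := h.pos
  have : 0 < 1 - ζ := sub_pos.2 h.lt_one
  have product_eq_one : 9 * ((1 + 2 * ζ) / (1 - ζ) ^ 2) ^ 2 * ζ = 1 := by
    field_simp
    linear_combination h.eq
  have logb_product := congrArg (logb 2) product_eq_one
  rw [logb_mul (by positivity) (by positivity), logb_mul (by positivity) (by positivity),
    logb_pow, logb_one] at logb_product
  push_cast at logb_product
  linear_combination α * logb_product

theorem runValue_sqrt_two (h : IsCriticalWeight ζ) : runValue 3 √ζ 2 = 1 := by
  have h0 := h.pos.le
  have : 0 < 1 - ζ := sub_pos.2 h.lt_one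
  rw [runValue_three_two (sqrt_nonneg ζ) ((sqrt_lt' one_pos).2 (by simpa using h.lt_one)),
    sq_sqrt h0, div_eq_one_iff_eq (by positivity)]
  refine (pow_left_inj₀ (by positivity) (by positivity) two_ne_zero).1 ?_
  rw [mul_pow, mul_pow, sq_sqrt h0]
  linear_combination h.eq

end IsCriticalWeight

end CriticalWeight

section UpperBound

variable {as : List ℕ} {ζ t : ℝ} {m N : ℕ}

theorem occSeries_mem_nonnegSeries (b : ℕ) (as : List ℕ) : occSeries b as ∈ nonnegSeries := by
  refine mul_mem (list_prod_mem fun F hF => ?_) (geomSeries_mem_nonnegSeries 1)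
  obtain ⟨a, -, rfl⟩ := mem_map.1 hF
  exact runSeries_mem_nonnegSeries a

theorem coeff_mul_pow_le_coeff_mul_sqrt_pow {F : ℝ⟦X⟧} (hF : F ∈ nonnegSeries) (ht0 : 0 ≤ t)
    (ht1 : t ≤ 1) (hN : N ≤ 2 * m) : coeff N F * t ^ m ≤ coeff N F * √t ^ N := by
  have pow_eq : t ^ m = √t ^ (2 * m) := by rw [pow_mul, sq_sqrt ht0]
  rw [pow_eq]
  exact mul_le_mul_of_nonneg_left
    (pow_le_pow_of_le_one (sqrt_nonneg t) (sqrt_le_one.2 ht1) hN) (hF N)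

theorem coeff_occSeries_three_mul_pow_le (ht0 : 0 < t) (ht : t ≤ 1 / 8) (has : 0 ∉ as)
    (hN : N ≤ 2 * m) : coeff N (occSeries 3 as) * t ^ m ≤
      √((1 + t) / (2 * t)) / (1 - √t) * (runValue 3 √t 2 ^ as.length / √(as.length + 1)) := by
  have sqrt_lt_one : √t < 1 := (sqrt_lt' one_pos).2 (by linarith)
  have bound := coeff_occSeries_mul_pow_le (sqrt_pos.2 ht0) sqrt_lt_one
    (runValue_three_le_runValue_three_two (sqrt_nonneg t) (by rwa [sq_sqrt ht0.le])) has N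
  rw [sq_sqrt ht0.le] at bound
  exact (coeff_mul_pow_le_coeff_mul_sqrt_pow (occSeries_mem_nonnegSeries 3 as) ht0.le
    (by linarith) hN).trans bound

theorem IsCriticalWeight.coeff_occSeries_mul_le_of_many_runs (h : IsCriticalWeight ζ)
    (has : 0 ∉ as) (hN : N ≤ 2 * m) (hm : m ≤ 4 * as.length) :
    coeff N (occSeries 3 as) * ζ ^ m * √m ≤ 2 * (√((1 + ζ) / (2 * ζ)) / (1 - √ζ)) := by
  have bound := coeff_occSeries_three_mul_pow_le h.pos
    (h.lt_seven_div_hundred.le.trans (by norm_num)) has hN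
  have : 0 < 1 - √ζ := sub_pos.2 ((sqrt_lt' one_pos).2 (by simpa using h.lt_one))
  rw [h.runValue_sqrt_two, one_pow, mul_one_div, le_div_iff₀ (by positivity)] at bound
  have sqrt_le : √(m : ℝ) ≤ 2 * √(as.length + 1) := by
    rw [sqrt_le_left (by positivity), mul_pow, sq_sqrt (by positivity)]
    have : (m : ℝ) ≤ 4 * as.length := mod_cast hm
    linarith
  have := mul_le_mul_of_nonneg_left sqrt_le
    (mul_nonneg (occSeries_mem_nonnegSeries 3 as N) (pow_nonneg h.pos.le m))
  linarith

theorem sqrt_natCast_le_pow (m : ℕ) : √(m : ℝ) ≤ (5 / 4) ^ m := by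
  have bernoulli := one_add_mul_le_pow (a := (1 / 4 : ℝ)) (by norm_num) m
  have : √(m : ℝ) ≤ 1 + m * (1 / 4) := by
    rw [sqrt_le_left (by positivity)]
    linarith [sq_nonneg (1 - (m : ℝ) * (1 / 4))]
  norm_num at *
  linarith

theorem runValue_three_sqrt_one_div_eight_mem_Icc :
    runValue 3 √(1 / 8) 2 ∈ Set.Icc (0 : ℝ) 2 := by
  have sqrt_le : √(1 / 8 : ℝ) ≤ 2 / 5 := by
    rw [sqrt_le_left (by norm_num)]
    norm_num
  rw [runValue_three_two (sqrt_nonneg _) (by linarith), sq_sqrt (by norm_num)]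
  refine ⟨by positivity, ?_⟩
  norm_num at *
  linarith

-- Evaluating at `1 / 8` in place of `ζ` loses a factor exponential in the number of runs, but gains
-- one exponential in `m`.
theorem coeff_occSeries_mul_le_of_few_runs (hζ0 : 0 ≤ ζ) (hζ : ζ ≤ 7 / 100) (has : 0 ∉ as)
    (hN : N ≤ 2 * m) (hm : 4 * as.length ≤ m) :
    coeff N (occSeries 3 as) * ζ ^ m * √m ≤
      √((1 + 1 / 8) / (2 * (1 / 8))) / (1 - √(1 / 8)) := by
  set L := √((1 + 1 / 8) / (2 * (1 / 8))) / (1 - √(1 / 8))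
  have hL : 0 ≤ L :=
    div_nonneg (sqrt_nonneg _) (sub_nonneg.2 (sqrt_le_one.2 (by norm_num)))
  have two_pow_le : (2 : ℝ) ^ as.length ≤ (5 / 4) ^ m := by
    calc (2 : ℝ) ^ as.length ≤ ((5 / 4) ^ 4) ^ as.length := by gcongr; norm_num
      _ = (5 / 4) ^ (4 * as.length) := (pow_mul _ _ _).symm
      _ ≤ (5 / 4) ^ m := pow_le_pow_right₀ (by norm_num) hm
  obtain ⟨value_nonneg, value_le⟩ := runValue_three_sqrt_one_div_eight_mem_Icc
  have bound : coeff N (occSeries 3 as) * (1 / 8) ^ m ≤ L * (5 / 4) ^ m := by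
    refine (coeff_occSeries_three_mul_pow_le (by norm_num) le_rfl has hN).trans ?_
    gcongr
    calc runValue 3 √(1 / 8) 2 ^ as.length / √(as.length + 1)
        ≤ runValue 3 √(1 / 8) 2 ^ as.length :=
          div_le_self (by positivity) (one_le_sqrt.2 (by simp))
      _ ≤ 2 ^ as.length := by gcongr
      _ ≤ (5 / 4) ^ m := two_pow_le
  calc coeff N (occSeries 3 as) * ζ ^ m * √m
      ≤ coeff N (occSeries 3 as) * (7 / 100) ^ m * (5 / 4) ^ m := by
        have : 0 ≤ coeff N (occSeries 3 as) := occSeries_mem_nonnegSeries 3 as N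
        gcongr
        exact sqrt_natCast_le_pow m
    _ = coeff N (occSeries 3 as) * (1 / 8) ^ m * (7 / 10) ^ m := by
        rw [mul_assoc, mul_assoc, ← mul_pow, ← mul_pow]
        norm_num
    _ ≤ L * (5 / 4) ^ m * (7 / 10) ^ m := by gcongr
    _ = L * (7 / 8) ^ m := by
        rw [mul_assoc, ← mul_pow]
        norm_num
    _ ≤ L := mul_le_of_le_one_right hL (pow_le_one₀ (by norm_num) (by norm_num))

theorem IsCriticalWeight.exists_coeff_occSeries_mul_le (h : IsCriticalWeight ζ) :
    ∃ K, ∀ (as : List ℕ) (m N : ℕ), 0 ∉ as → N ≤ 2 * m →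
      coeff N (occSeries 3 as) * ζ ^ m * √m ≤ K := by
  refine ⟨max (2 * (√((1 + ζ) / (2 * ζ)) / (1 - √ζ)))
    (√((1 + 1 / 8) / (2 * (1 / 8))) / (1 - √(1 / 8))), fun as m N has hN => ?_⟩
  rcases le_total m (4 * as.length) with hm | hm
  · exact (h.coeff_occSeries_mul_le_of_many_runs has hN hm).trans (le_max_left _ _)
  · exact (coeff_occSeries_mul_le_of_few_runs h.pos.le h.lt_seven_div_hundred.le has hN hm).trans
      (le_max_right _ _)

end UpperBound

section LowerBound

theorem HasValueAt.summable_pow_mul {F : ℝ⟦X⟧} {y z M : ℝ} (h : HasValueAt F z M) (hy : 0 ≤ y)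
    (hyz : y < z) (k : ℕ) : Summable fun n : ℕ => (n : ℝ) ^ k * (coeff n F * y ^ n) := by
  have hz : 0 < z := hy.trans_lt hyz
  obtain ⟨B, hB⟩ := h.summable.tendsto_atTop_zero.norm.bddAbove_range
  have ratio_lt_one : ‖y / z‖ < 1 := by
    rwa [Real.norm_of_nonneg (by positivity), div_lt_one hz]
  refine .of_norm_bounded ((summable_pow_mul_geometric_of_norm_lt_one k ratio_lt_one).mul_left B)
    fun n => ?_
  have split : (n : ℝ) ^ k * (coeff n F * y ^ n) =
      coeff n F * z ^ n * (n ^ k * (y / z) ^ n) := by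
    rw [div_pow]
    field_simp
  rw [split, norm_mul, Real.norm_of_nonneg (by positivity : 0 ≤ (n : ℝ) ^ k * (y / z) ^ n)]
  exact mul_le_mul_of_nonneg_right (hB ⟨n, rfl⟩) (by positivity)

theorem exists_hasMoments_rescale {F : ℝ⟦X⟧} {y z M : ℝ} (hy : 0 ≤ y) (hyz : y < z)
    (hFz : HasValueAt F z M) (hFy : HasValueAt F y 1) :
    ∃ μ v, HasMoments (rescale y F) μ v := by
  have mean := (hFz.summable_pow_mul hy hyz 1).hasSum
  have second := (hFz.summable_pow_mul hy hyz 2).hasSum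
  set μ := ∑' n : ℕ, (n : ℝ) ^ 1 * (coeff n F * y ^ n)
  set s := ∑' n : ℕ, (n : ℝ) ^ 2 * (coeff n F * y ^ n)
  refine ⟨μ, s - μ ^ 2, HasValueAt.rescale (by rwa [mul_one]), ?_, ?_⟩
  · simpa [HasValueAt, coeff_eulerDerivation, coeff_rescale, mul_comm] using mean
  · simpa [HasValueAt, coeff_eulerDerivation, coeff_rescale, pow_two, mul_assoc, mul_left_comm,
      mul_comm] using second

theorem coeff_runSeries_pow_le_occ (b a k N : ℕ) (ha : a ≠ 0) (c : Fin 2) :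
    coeff N (runSeries b a ^ k) ≤ (occ (blockWord b c N) (runWord c (replicate k a)) : ℝ) := by
  have : 0 ∉ replicate k a := fun h => ha (eq_of_mem_replicate h).symm
  rw [occ_blockWord_runWord this, occSeries, map_replicate, prod_replicate]
  exact coeff_le_coeff_mul (pow_mem (runSeries_mem_nonnegSeries a) k)
    (geomSeries_mem_nonnegSeries 1) (coeff_zero_geomSeries 1).ge N

-- The witnesses are words all of whose runs have length two, the length of critical weight `1`.
theorem IsCriticalWeight.exists_le_occ {ζ : ℝ} (h : IsCriticalWeight ζ) : ∃ κ > 0, ∀ m : ℕ,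
    0 < m → ∃ u, κ / √m ≤ occ (blockWord 3 0 (2 * m)) u * ζ ^ m := by
  have hy : 0 < √ζ := sqrt_pos.2 h.pos
  have hy1 : √ζ < 1 := (sqrt_lt' one_pos).2 (by simpa using h.lt_one)
  obtain ⟨z, hyz, hz1⟩ := exists_between hy1
  have mass : HasValueAt (runSeries 3 2) √ζ 1 := by
    rw [← h.runValue_sqrt_two]
    exact hasValueAt_runSeries hy.le hy1 2
  obtain ⟨μ, v, moments⟩ := exists_hasMoments_rescale hy.le hyz
    (hasValueAt_runSeries (b := 3) (hy.trans hyz).le hz1 2) mass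
  obtain ⟨κ, hκ, hcoeff⟩ := exists_coeff_pow_ge (p := rescale √ζ (runSeries 3 2))
    (by simp [runSeries])
    (fun n => by
      rw [coeff_rescale]
      exact mul_nonneg (by positivity) (runSeries_mem_nonnegSeries 2 n))
    (by simpa [runSeries, coeff_rescale, Nat.choose] using h.pos) moments
  refine ⟨κ / √2, by positivity, fun m hm => ?_⟩
  obtain ⟨k, hk⟩ := hcoeff (2 * m) (by omega)
  refine ⟨runWord 0 (replicate k 2), ?_⟩
  rw [← map_pow, coeff_rescale, pow_mul, sq_sqrt h.pos.le, mul_comm (ζ ^ m), Nat.cast_mul,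
    Nat.cast_ofNat, sqrt_mul zero_le_two, ← div_div] at hk
  refine hk.trans ?_
  have := h.pos
  gcongr
  exact coeff_runSeries_pow_le_occ 3 2 k (2 * m) two_ne_zero 0

end LowerBound

section MaximalOccurrences

variable {ζ : ℝ}

-- A word that starts with the other letter cannot use the first block.
theorem exists_occ_blockWord_eq_coeff (b : ℕ) (c : Fin 2) (N : ℕ) (u : List (Fin 2)) :
    ∃ as N', 0 ∉ as ∧ N' ≤ N ∧ (occ (blockWord b c N) u : ℝ) = coeff N' (occSeries b as) := by
  obtain ⟨d, as, has, rfl⟩ := exists_eq_runWord u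
  rcases eq_or_eq_add_one_fin_two c d with rfl | rfl
  · exact ⟨as, N, has, le_rfl, occ_blockWord_runWord has d N⟩
  · cases N with
    | zero => exact ⟨as, 0, has, le_rfl, occ_blockWord_runWord has (c + 1) 0⟩
    | succ N =>
      refine ⟨as, N, has, N.le_succ, ?_⟩
      rw [blockWord, occ_replicate_append_of_head?_ne (head?_runWord_add_one_ne c has),
        occ_blockWord_runWord has]

theorem IsCriticalWeight.exists_maxocc_mem_Icc (h : IsCriticalWeight ζ) : ∃ κ K, 0 < κ ∧
    ∀ m : ℕ, 0 < m → maxocc (blockWord 3 0 (2 * m)) * ζ ^ m * √m ∈ Set.Icc κ K := by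
  obtain ⟨κ, hκ, lower⟩ := h.exists_le_occ
  obtain ⟨K, upper⟩ := h.exists_coeff_occSeries_mul_le
  refine ⟨κ, K, hκ, fun m hm => ⟨?_, ?_⟩⟩
  · obtain ⟨u, hu⟩ := lower m hm
    have : 0 < √(m : ℝ) := sqrt_pos.2 (mod_cast hm)
    refine ((div_le_iff₀ this).1 hu).trans ?_
    have := h.pos
    gcongr
    exact occ_le_maxocc _ u
  · obtain ⟨u, hu⟩ := exists_occ_eq_maxocc (blockWord 3 0 (2 * m))
    obtain ⟨as, N, has, hN, hocc⟩ := exists_occ_blockWord_eq_coeff 3 0 (2 * m) u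
    rw [← hu, hocc]
    exact upper as m N has hN

theorem logb_mul_pow_mul_sqrt {b M x : ℝ} (hM : 0 < M) (hζ : 0 < ζ) (hx : 0 < x) (m : ℕ) :
    logb b (M * ζ ^ m * √x) = logb b M - (-logb b ζ * m - 1 / 2 * logb b x) := by
  rw [logb_mul (by positivity) (by positivity), logb_mul (by positivity) (by positivity),
    logb_pow, sqrt_eq_rpow, logb_rpow_eq_mul_logb_of_pos hx]
  ring

end MaximalOccurrences

theorem stmt_17 (α : ℝ) (hα : 0 < α)
    (hroot : 457 * α ^ 4 - 246 * α ^ 2 + 72 * α - 27 = 0)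
    (huniq : ∀ β : ℝ, 0 < β → 457 * β ^ 4 - 246 * β ^ 2 + 72 * β - 27 = 0 → β = α)
    (ζ γ : ℝ)
    (hζ : ζ = (1 - 9 * α + Real.sqrt (73 * α ^ 2 - 18 * α + 9)) / (4 + 4 * α))
    (hγ : γ = α * Real.logb 2 9 + 2 * α * Real.logb 2 ((1 + 2 * ζ) / (1 - ζ) ^ 2)
      - (1 - α) * Real.logb 2 ζ) :
    ∃ C : ℝ, ∀ m : ℕ, 1 ≤ m →
      |Real.logb 2 (maxocc (rep ([0, 0, 0, 1, 1, 1] : List (Fin 2)) m)) -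
        (γ * m - (1 / 2) * Real.logb 2 m)| ≤ C := by
  have critical : IsCriticalWeight ζ := isCriticalWeight_of_quartic_eq_zero hα hroot hζ
  obtain ⟨κ, K, hκ, bounds⟩ := critical.exists_maxocc_mem_Icc
  refine ⟨max |logb 2 κ| |logb 2 K|, fun m hm => ?_⟩
  obtain ⟨lower, upper⟩ := bounds m hm
  have word_eq : rep ([0, 0, 0, 1, 1, 1] : List (Fin 2)) m = blockWord 3 0 (2 * m) :=
    rep_eq_blockWord 3 0 m
  have maxocc_pos : (0 : ℝ) < maxocc (blockWord 3 0 (2 * m)) := by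
    refine Nat.cast_nonneg _ |>.lt_of_ne fun h => hκ.not_ge ?_
    simpa [← h] using lower
  rw [word_eq, hγ, critical.logb_combination_eq,
    ← logb_mul_pow_mul_sqrt maxocc_pos critical.pos (mod_cast hm)]
  exact abs_le_max_abs_abs (logb_le_logb_of_le one_lt_two hκ lower)
    (logb_le_logb_of_le one_lt_two (hκ.trans_le lower) upper)
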